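/- arXiv:hep-th/0612180 — 5 statements merged into one kernel-verified Lean document; each statement's English description precedes it below -/
import Mathlib

section
/- For all real a, b with 0 < a < 2, 0 < b < 2 and a + b > 2, and every nonzero q ∈ ℝ⁴ (Euclidean four-space), the function k ↦ (‖k‖²)^{−a} · (‖k−q‖²)^{−b} is integrable on ℝ⁴ and π^{−2} · ∫_{ℝ⁴} (‖k‖²)^{−a} (‖k−q‖²)^{−b} dk = [Γ(a+b−2) Γ(2−a) Γ(2−b)] / [Γ(a) Γ(b) Γ(4−a−b)] · (‖q‖²)^{2−a−b}. -/
open MeasureTheory Real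

/-!
By Schwinger's trick, `Γ(c) x⁻ᶜ = ∫₀^∞ sᶜ⁻¹ e^{-xs} ds` turns both propagators into Gaussians. By
Tonelli the integral over `k` can be done first: completing the square makes it a single Gaussian
integral, which leaves `(π / (s + t))^{D/2} exp (-(st / (s + t)) ‖q‖²)`. After the substitution
`t = su` the exponent is linear in `s`, so the `s`-integral is again a Gamma integral, and the
remaining `u`-integral is the Beta integral `B(D/2 - a, D/2 - b)`. As every integrand is
nonnegative, the computation runs in `ℝ≥0∞`, and integrability is the finiteness of its result.
-/

namespace OneLoopBubble

open Set Module
open scoped ENNReal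
open ProbabilityTheory (beta)

section LIntegral

variable {α β γ : Type*} [MeasurableSpace α] [MeasurableSpace β] [MeasurableSpace γ]
  {μ : Measure α} {ν : Measure β} {ρ : Measure γ}

lemma lintegral_ofReal_const_mul {c : ℝ} (hc : 0 ≤ c) (f : α → ℝ) :
    ∫⁻ x, .ofReal (c * f x) ∂μ = .ofReal c * ∫⁻ x, .ofReal (f x) ∂μ := by
  simp only [ENNReal.ofReal_mul hc, lintegral_const_mul' _ _ ENNReal.ofReal_ne_top]

lemma lintegral_ofReal_eq_of_integral_pos {f : α → ℝ} (hf : 0 ≤ᵐ[μ] f) (hpos : 0 < ∫ x, f x ∂μ) :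
    ∫⁻ x, .ofReal (f x) ∂μ = .ofReal (∫ x, f x ∂μ) :=
  (ofReal_integral_eq_lintegral_ofReal (.of_integral_ne_zero hpos.ne') hf).symm

lemma integrable_and_integral_eq_of_lintegral_ofReal_eq {f : α → ℝ} {r : ℝ}
    (hfm : AEStronglyMeasurable f μ) (hf : 0 ≤ᵐ[μ] f) (hr : 0 ≤ r)
    (h : ∫⁻ x, .ofReal (f x) ∂μ = .ofReal r) : Integrable f μ ∧ ∫ x, f x ∂μ = r := by
  refine ⟨(lintegral_ofReal_ne_top_iff_integrable hfm hf).1 (h ▸ ENNReal.ofReal_ne_top), ?_⟩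
  rw [integral_eq_lintegral_of_nonneg_ae hf hfm, h, ENNReal.toReal_ofReal hr]

lemma lintegral_lintegral_lintegral_rotate [SFinite μ] [SFinite ν] [SFinite ρ]
    {f : α → β → γ → ℝ≥0∞} (hf : Measurable fun z : (α × β) × γ => f z.1.1 z.1.2 z.2) :
    ∫⁻ x, ∫⁻ y, ∫⁻ z, f x y z ∂ρ ∂ν ∂μ = ∫⁻ y, ∫⁻ z, ∫⁻ x, f x y z ∂μ ∂ρ ∂ν := by
  rw [lintegral_lintegral_swap hf.lintegral_prod_right'.aemeasurable]
  refine lintegral_congr fun y => lintegral_lintegral_swap ?_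
  have hembed : Measurable fun p : α × γ => ((p.1, y), p.2) := by fun_prop
  exact (hf.comp hembed).aemeasurable

lemma setLIntegral_Ioi_zero_comp_mul_left {s : ℝ} (hs : 0 < s) (f : ℝ → ℝ≥0∞) :
    ∫⁻ t in Ioi 0, f t = ∫⁻ u in Ioi 0, .ofReal s * f (s * u) := by
  have himage : (s * ·) '' Ioi 0 = Ioi 0 := by simp [image_mul_left_Ioi hs]
  have hderiv (u : ℝ) : HasDerivWithinAt (s * ·) s (Ioi 0) u := by
    simpa using ((hasDerivAt_id u).const_mul s).hasDerivWithinAt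
  simpa only [himage, abs_of_pos hs] using
    lintegral_image_eq_lintegral_abs_deriv_mul measurableSet_Ioi (fun u _ => hderiv u)
      (mul_right_injective₀ hs.ne').injOn f

end LIntegral

section GammaBeta

lemma setLIntegral_rpow_mul_exp_neg_mul_Ioi {c x : ℝ} (hc : 0 < c) (hx : 0 < x) :
    ∫⁻ s in Ioi 0, .ofReal (s ^ (c - 1) * exp (-(x * s))) = .ofReal (Gamma c * x ^ (-c)) := by
  have hGamma : ∫ s in Ioi 0, s ^ (c - 1) * exp (-(x * s)) = Gamma c * x ^ (-c) := by
    rw [integral_rpow_mul_exp_neg_mul_Ioi hc hx, one_div, inv_rpow hx.le, rpow_neg hx.le, mul_comm]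
  have hpos : 0 < Gamma c * x ^ (-c) := by positivity
  rw [lintegral_ofReal_eq_of_integral_pos _ (hGamma ▸ hpos), hGamma]
  filter_upwards [self_mem_ae_restrict measurableSet_Ioi] with s (hs : 0 < s)
  positivity

/-- The substitution `u = x / (1 - x)` gives the usual Beta integral over `(0, 1)`; instead of
substituting, the proof writes `(1 + u) ^ (-(p + r))` as a Gamma integral. -/
lemma setLIntegral_rpow_mul_one_add_rpow_Ioi {p r : ℝ} (hp : 0 < p) (hr : 0 < r) :
    ∫⁻ u in Ioi 0, .ofReal (u ^ (p - 1) * (1 + u) ^ (-(p + r))) = .ofReal (beta p r) := by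
  calc ∫⁻ u in Ioi 0, .ofReal (u ^ (p - 1) * (1 + u) ^ (-(p + r)))
      = ∫⁻ u in Ioi 0, ∫⁻ s in Ioi 0, .ofReal
          ((u ^ (p - 1) / Gamma (p + r)) * (s ^ (p + r - 1) * exp (-((1 + u) * s)))) := by
        refine setLIntegral_congr_fun measurableSet_Ioi fun u (hu : 0 < u) => ?_
        rw [lintegral_ofReal_const_mul (by positivity),
          setLIntegral_rpow_mul_exp_neg_mul_Ioi (add_pos hp hr) (by positivity),
          ← ENNReal.ofReal_mul (by positivity)]
        field_simp
    _ = ∫⁻ s in Ioi 0, ∫⁻ u in Ioi 0, .ofReal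
          ((u ^ (p - 1) / Gamma (p + r)) * (s ^ (p + r - 1) * exp (-((1 + u) * s)))) :=
        lintegral_lintegral_swap (by fun_prop)
    _ = ∫⁻ s in Ioi 0, .ofReal (Gamma p / Gamma (p + r) * (s ^ (r - 1) * exp (-(1 * s)))) := by
        refine setLIntegral_congr_fun measurableSet_Ioi fun s (hs : 0 < s) => ?_
        have hsplit (u : ℝ) :
            u ^ (p - 1) / Gamma (p + r) * (s ^ (p + r - 1) * exp (-((1 + u) * s))) =
              s ^ (p + r - 1) * exp (-s) / Gamma (p + r) * (u ^ (p - 1) * exp (-(s * u))) := by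
          rw [show -((1 + u) * s) = -s + -(s * u) by ring, exp_add]
          ring
        simp only [hsplit]
        rw [lintegral_ofReal_const_mul (by positivity),
          setLIntegral_rpow_mul_exp_neg_mul_Ioi hp hs, ← ENNReal.ofReal_mul (by positivity),
          show r - 1 = p + r - 1 + -p by ring, rpow_add hs, one_mul]
        ring_nf
    _ = .ofReal (beta p r) := by
        rw [lintegral_ofReal_const_mul (by positivity),
          setLIntegral_rpow_mul_exp_neg_mul_Ioi hr one_pos, ← ENNReal.ofReal_mul (by positivity),
          one_rpow, beta]
        ring_nf

end GammaBeta

section Gaussian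

variable {V : Type*} [NormedAddCommGroup V] [InnerProductSpace ℝ V]

lemma mul_sq_norm_add_mul_sq_norm_sub {s t : ℝ} (hst : s + t ≠ 0) (k q : V) :
    s * ‖k‖ ^ 2 + t * ‖k - q‖ ^ 2 =
      s * t / (s + t) * ‖q‖ ^ 2 + (s + t) * ‖k - (t / (s + t)) • q‖ ^ 2 := by
  rw [norm_sub_sq_real, norm_sub_sq_real, norm_smul, inner_smul_right, mul_pow, norm_eq_abs,
    sq_abs]
  field_simp
  ring

variable [FiniteDimensional ℝ V] [MeasurableSpace V] [BorelSpace V]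

lemma lintegral_exp_neg_mul_sq_norm {c : ℝ} (hc : 0 < c) :
    ∫⁻ k : V, .ofReal (exp (-c * ‖k‖ ^ 2)) = .ofReal ((π / c) ^ (finrank ℝ V / 2 : ℝ)) := by
  have hGauss := GaussianFourier.integral_rexp_neg_mul_sq_norm (V := V) hc
  rw [lintegral_ofReal_eq_of_integral_pos (.of_forall fun _ => (exp_pos _).le)
    (hGauss ▸ by positivity), hGauss]

lemma lintegral_exp_neg_sq_norm_mul_exp_neg_sq_norm_sub {s t : ℝ} (hs : 0 < s) (ht : 0 < t)
    (q : V) :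
    ∫⁻ k : V, .ofReal (exp (-(‖k‖ ^ 2 * s)) * exp (-(‖k - q‖ ^ 2 * t))) =
      .ofReal ((π / (s + t)) ^ (finrank ℝ V / 2 : ℝ) * exp (-(s * t / (s + t) * ‖q‖ ^ 2))) := by
  have hst : 0 < s + t := add_pos hs ht
  have hsquare (k : V) : exp (-(‖k‖ ^ 2 * s)) * exp (-(‖k - q‖ ^ 2 * t)) =
      exp (-(s * t / (s + t) * ‖q‖ ^ 2)) * exp (-(s + t) * ‖k - (t / (s + t)) • q‖ ^ 2) := by
    rw [← exp_add, ← exp_add]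
    congr 1
    linear_combination -mul_sq_norm_add_mul_sq_norm_sub hst.ne' k q
  simp only [hsquare]
  rw [lintegral_ofReal_const_mul (exp_pos _).le,
    lintegral_sub_right_eq_self fun k : V => .ofReal (exp (-(s + t) * ‖k‖ ^ 2)),
    lintegral_exp_neg_mul_sq_norm hst, ← ENNReal.ofReal_mul (exp_pos _).le, mul_comm]

end Gaussian

section Schwinger

/-- The Schwinger-parametric integrand of the bubble with propagator exponents `a` and `b` and
squared external momentum `Q`, with the normalisation `1 / (Γ(a) Γ(b))` included. Here `d` is half
of the dimension of space-time. -/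
noncomputable def schwingerIntegrand (d a b Q s t : ℝ) : ℝ :=
  s ^ (a - 1) * t ^ (b - 1) / (Gamma a * Gamma b) *
    ((π / (s + t)) ^ d * exp (-(s * t / (s + t) * Q)))

lemma setLIntegral_setLIntegral_rpow_mul_exp_neg {a b x y : ℝ} (ha : 0 < a) (hb : 0 < b)
    (hx : 0 < x) (hy : 0 < y) :
    ∫⁻ s in Ioi 0, ∫⁻ t in Ioi 0, .ofReal
        (s ^ (a - 1) * t ^ (b - 1) / (Gamma a * Gamma b) * (exp (-(x * s)) * exp (-(y * t)))) =
      .ofReal (x ^ (-a) * y ^ (-b)) := by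
  calc _ = ∫⁻ s in Ioi 0, .ofReal (y ^ (-b) / Gamma a * (s ^ (a - 1) * exp (-(x * s)))) := by
        refine setLIntegral_congr_fun measurableSet_Ioi fun s (hs : 0 < s) => ?_
        have hsplit (t : ℝ) :
            s ^ (a - 1) * t ^ (b - 1) / (Gamma a * Gamma b) * (exp (-(x * s)) * exp (-(y * t))) =
              s ^ (a - 1) * exp (-(x * s)) / (Gamma a * Gamma b) *
                (t ^ (b - 1) * exp (-(y * t))) := by
          ring
        simp only [hsplit]
        rw [lintegral_ofReal_const_mul (by positivity),
          setLIntegral_rpow_mul_exp_neg_mul_Ioi hb hy, ← ENNReal.ofReal_mul (by positivity)]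
        field_simp
    _ = .ofReal (x ^ (-a) * y ^ (-b)) := by
        rw [lintegral_ofReal_const_mul (by positivity),
          setLIntegral_rpow_mul_exp_neg_mul_Ioi ha hx, ← ENNReal.ofReal_mul (by positivity)]
        field_simp

lemma lintegral_propagators_eq_setLIntegral_schwingerIntegrand {V : Type*} [NormedAddCommGroup V]
    [InnerProductSpace ℝ V] [FiniteDimensional ℝ V] [MeasurableSpace V] [BorelSpace V]
    [Nontrivial V] {a b : ℝ} (ha : 0 < a) (hb : 0 < b) (q : V) :
    ∫⁻ k : V, .ofReal ((‖k‖ ^ 2) ^ (-a) * (‖k - q‖ ^ 2) ^ (-b)) =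
      ∫⁻ s in Ioi 0, ∫⁻ t in Ioi 0,
        .ofReal (schwingerIntegrand (finrank ℝ V / 2) a b (‖q‖ ^ 2) s t) := by
  calc _ = ∫⁻ k : V, ∫⁻ s in Ioi 0, ∫⁻ t in Ioi 0, .ofReal
            (s ^ (a - 1) * t ^ (b - 1) / (Gamma a * Gamma b) *
              (exp (-(‖k‖ ^ 2 * s)) * exp (-(‖k - q‖ ^ 2 * t)))) := by
        refine lintegral_congr_ae ?_
        filter_upwards [Measure.ae_ne volume 0, Measure.ae_ne volume q] with k hk hkq
        have hkq' : k - q ≠ 0 := sub_ne_zero.2 hkq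
        rw [setLIntegral_setLIntegral_rpow_mul_exp_neg ha hb (by positivity) (by positivity)]
    _ = ∫⁻ s in Ioi 0, ∫⁻ t in Ioi 0, ∫⁻ k : V, .ofReal
            (s ^ (a - 1) * t ^ (b - 1) / (Gamma a * Gamma b) *
              (exp (-(‖k‖ ^ 2 * s)) * exp (-(‖k - q‖ ^ 2 * t)))) :=
        lintegral_lintegral_lintegral_rotate (by fun_prop)
    _ = _ := by
        refine setLIntegral_congr_fun measurableSet_Ioi fun s (hs : 0 < s) => ?_
        refine setLIntegral_congr_fun measurableSet_Ioi fun t (ht : 0 < t) => ?_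
        rw [lintegral_ofReal_const_mul (by positivity),
          lintegral_exp_neg_sq_norm_mul_exp_neg_sq_norm_sub hs ht,
          ← ENNReal.ofReal_mul (by positivity), schwingerIntegrand]

variable {d a b Q : ℝ}

lemma mul_schwingerIntegrand_mul_left {s u : ℝ} (hs : 0 < s) (hu : 0 < u) :
    s * schwingerIntegrand d a b Q s (s * u) =
      π ^ d * (u ^ (b - 1) * (1 + u) ^ (-d)) / (Gamma a * Gamma b) *
        (s ^ (a + b - d - 1) * exp (-(u / (1 + u) * Q * s))) := by
  have hu1 : 0 < 1 + u := by positivity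
  have hexponent : s * (s * u) / (s + s * u) * Q = u / (1 + u) * Q * s := by field_simp
  have hpower : s ^ (a + b - d - 1) = s * s ^ (a - 1) * s ^ (b - 1) * s ^ (-d) := by
    rw [show a + b - d - 1 = 1 + (a - 1) + (b - 1) + -d by ring, rpow_add hs, rpow_add hs,
      rpow_add hs, rpow_one]
  rw [schwingerIntegrand, hexponent, hpower, show s + s * u = s * (1 + u) by ring,
    mul_rpow hs.le hu.le, div_rpow pi_pos.le (by positivity), mul_rpow hs.le hu1.le,
    rpow_neg hs.le, rpow_neg hu1.le]
  field_simp

lemma rpow_mul_one_add_rpow_mul_div_rpow {u : ℝ} (hu : 0 < u) (hQ : 0 < Q) :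
    u ^ (b - 1) * (1 + u) ^ (-d) * (u / (1 + u) * Q) ^ (-(a + b - d)) =
      Q ^ (d - a - b) * (u ^ (d - a - 1) * (1 + u) ^ (-(d - a + (d - b)))) := by
  have hu1 : 0 < 1 + u := by positivity
  have hpower_u : u ^ (d - a - 1) = u ^ (b - 1) * u ^ (d - a - b) := by
    rw [← rpow_add hu]
    ring_nf
  have hpower_one_add_u :
      (1 + u) ^ (-(d - a + (d - b))) = (1 + u) ^ (-d) / (1 + u) ^ (d - a - b) := by
    rw [← rpow_sub hu1]
    ring_nf
  rw [show -(a + b - d) = d - a - b by ring, mul_rpow (by positivity) hQ.le,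
    div_rpow hu.le hu1.le, hpower_u, hpower_one_add_u]
  ring

lemma setLIntegral_setLIntegral_schwingerIntegrand (had : a < d) (hbd : b < d) (hab : d < a + b)
    (hQ : 0 < Q) :
    ∫⁻ s in Ioi 0, ∫⁻ t in Ioi 0, .ofReal (schwingerIntegrand d a b Q s t) =
      .ofReal (π ^ d * (Gamma (a + b - d) * beta (d - a) (d - b) / (Gamma a * Gamma b)) *
        Q ^ (d - a - b)) := by
  have ha : 0 < a := by linarith
  have hb : 0 < b := by linarith
  have habd : 0 < a + b - d := sub_pos.2 hab
  calc _ = ∫⁻ s in Ioi 0, ∫⁻ u in Ioi 0, .ofReal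
            (π ^ d * (u ^ (b - 1) * (1 + u) ^ (-d)) / (Gamma a * Gamma b) *
              (s ^ (a + b - d - 1) * exp (-(u / (1 + u) * Q * s)))) := by
        refine setLIntegral_congr_fun measurableSet_Ioi fun s (hs : 0 < s) => ?_
        rw [setLIntegral_Ioi_zero_comp_mul_left hs]
        refine setLIntegral_congr_fun measurableSet_Ioi fun u (hu : 0 < u) => ?_
        rw [← ENNReal.ofReal_mul hs.le, mul_schwingerIntegrand_mul_left hs hu]
    _ = ∫⁻ u in Ioi 0, ∫⁻ s in Ioi 0, .ofReal
            (π ^ d * (u ^ (b - 1) * (1 + u) ^ (-d)) / (Gamma a * Gamma b) *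
              (s ^ (a + b - d - 1) * exp (-(u / (1 + u) * Q * s)))) :=
        lintegral_lintegral_swap (by fun_prop)
    _ = ∫⁻ u in Ioi 0, .ofReal
            (π ^ d * Gamma (a + b - d) * Q ^ (d - a - b) / (Gamma a * Gamma b) *
              (u ^ (d - a - 1) * (1 + u) ^ (-(d - a + (d - b))))) := by
        refine setLIntegral_congr_fun measurableSet_Ioi fun u (hu : 0 < u) => ?_
        rw [lintegral_ofReal_const_mul (by positivity),
          setLIntegral_rpow_mul_exp_neg_mul_Ioi habd (by positivity),
          ← ENNReal.ofReal_mul (by positivity)]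
        congr 1
        linear_combination π ^ d * Gamma (a + b - d) / (Gamma a * Gamma b) *
          rpow_mul_one_add_rpow_mul_div_rpow (d := d) (a := a) (b := b) hu hQ
    _ = _ := by
        rw [lintegral_ofReal_const_mul (by positivity),
          setLIntegral_rpow_mul_one_add_rpow_Ioi (sub_pos.2 had) (sub_pos.2 hbd),
          ← ENNReal.ofReal_mul (by positivity)]
        ring_nf

end Schwinger

end OneLoopBubble

theorem one_loop_bubble_G4_general {V : Type*} [NormedAddCommGroup V] [InnerProductSpace ℝ V]
    [FiniteDimensional ℝ V] [MeasurableSpace V] [BorelSpace V] {a b d : ℝ}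
    (hd : d = Module.finrank ℝ V / 2) (had : a < d) (hbd : b < d) (hab : d < a + b)
    {q : V} (hq : q ≠ 0) :
    Integrable (fun k : V => (‖k‖ ^ 2) ^ (-a) * (‖k - q‖ ^ 2) ^ (-b)) ∧
      π ^ (-d) * ∫ k : V, (‖k‖ ^ 2) ^ (-a) * (‖k - q‖ ^ 2) ^ (-b) =
        Gamma (a + b - d) * Gamma (d - a) * Gamma (d - b) /
          (Gamma a * Gamma b * Gamma (2 * d - a - b)) * (‖q‖ ^ 2) ^ (d - a - b) := by
  have ha : 0 < a := by linarith
  have hb : 0 < b := by linarith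
  have habd : 0 < a + b - d := sub_pos.2 hab
  have hbeta := ProbabilityTheory.beta_pos (sub_pos.2 had) (sub_pos.2 hbd)
  have : Nontrivial V := nontrivial_of_ne q 0 hq
  have hlintegral :=
    OneLoopBubble.lintegral_propagators_eq_setLIntegral_schwingerIntegrand ha hb q
  rw [← hd, OneLoopBubble.setLIntegral_setLIntegral_schwingerIntegrand had hbd hab
    (by positivity)] at hlintegral
  obtain ⟨hint, heq⟩ := OneLoopBubble.integrable_and_integral_eq_of_lintegral_ofReal_eq
    (Measurable.aestronglyMeasurable (by fun_prop)) (.of_forall fun k => by dsimp; positivity)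
    (by positivity) hlintegral
  refine ⟨hint, ?_⟩
  rw [heq, ProbabilityTheory.beta, rpow_neg pi_pos.le,
    show d - a + (d - b) = 2 * d - a - b by ring]
  field_simp

/-- **The massless one-loop bubble in Euclidean four-space.**
For `0 < a < 2`, `0 < b < 2`, `a + b > 2` and `q ≠ 0` in `ℝ⁴`, the function
`k ↦ (‖k‖²)^(−a) (‖k−q‖²)^(−b)` is integrable and
`π⁻² ∫ (‖k‖²)^(−a) (‖k−q‖²)^(−b) dk
  = Γ(a+b−2)Γ(2−a)Γ(2−b) / (Γ(a)Γ(b)Γ(4−a−b)) · (‖q‖²)^(2−a−b)`. -/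
theorem one_loop_bubble_G4
    (a b : ℝ) (ha₀ : 0 < a) (ha₂ : a < 2) (hb₀ : 0 < b) (hb₂ : b < 2)
    (hab : 2 < a + b) (q : EuclideanSpace ℝ (Fin 4)) (hq : q ≠ 0) :
    Integrable (fun k : EuclideanSpace ℝ (Fin 4) =>
        (‖k‖ ^ 2 : ℝ) ^ (-a) * (‖k - q‖ ^ 2 : ℝ) ^ (-b)) ∧
    π ^ (-2 : ℝ) *
        (∫ k : EuclideanSpace ℝ (Fin 4),
          (‖k‖ ^ 2 : ℝ) ^ (-a) * (‖k - q‖ ^ 2 : ℝ) ^ (-b)) =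
      Gamma (a + b - 2) * Gamma (2 - a) * Gamma (2 - b) /
          (Gamma a * Gamma b * Gamma (4 - a - b)) *
        (‖q‖ ^ 2 : ℝ) ^ (2 - a - b) := by
  have hbubble := one_loop_bubble_G4_general (d := 2) (by norm_num) ha₂ hb₂ hab hq
  rwa [show (2 * 2 : ℝ) = 4 by norm_num] at hbubble
end

section
/- For every real ρ with 0 < ρ < 1 and every nonzero q ∈ ℝ⁴ (Euclidean four-space), the function k ↦ (‖k‖²)^{−1−ρ} · (‖k−q‖²)^{−1} is integrable on ℝ⁴ and the normalized one-loop Mellin transform F₁(ρ; q) := (‖q‖²)^{ρ} · π^{−2} · ∫_{ℝ⁴} (‖k‖²)^{−1−ρ} (‖k−q‖²)^{−1} dk equals 1/(ρ(1−ρ)). -/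
open MeasureTheory Real

/-!
Each propagator is written as a Gamma integral,
`Γ(a) A⁻ᵃ = ∫₀^∞ s^(a-1) e^(-sA) ds` (Schwinger parametrization). By Tonelli the integral over the
loop momentum `k` can be done first; it is Gaussian and produces `exp(-‖q‖² st/(s+t))`. The scaling
`t = su` then turns the `s`-integral into a Gamma integral and leaves a Beta integral over `u`.
All integrands are nonnegative, so computing with `∫⁻` gives integrability along with the value.
-/

open Set Module
open ProbabilityTheory (beta beta_pos)

section Lebesgue

variable {α β γ : Type*} [MeasurableSpace α] [MeasurableSpace β] [MeasurableSpace γ]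

lemma lintegral_ofReal_const_mul {μ : Measure α} {c : ℝ} (hc : 0 ≤ c) (f : α → ℝ) :
    ∫⁻ x, ENNReal.ofReal (c * f x) ∂μ = ENNReal.ofReal c * ∫⁻ x, ENNReal.ofReal (f x) ∂μ := by
  simp_rw [ENNReal.ofReal_mul hc]
  exact lintegral_const_mul' _ _ ENNReal.ofReal_ne_top

lemma lintegral_lintegral_lintegral_rotate {μ : Measure α} {ν : Measure β} {ξ : Measure γ}
    [SFinite μ] [SFinite ν] [SFinite ξ] {f : α → β → γ → ENNReal}
    (hf : Measurable fun p : α × β × γ ↦ f p.1 p.2.1 p.2.2) :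
    ∫⁻ x, ∫⁻ y, ∫⁻ z, f x y z ∂ξ ∂ν ∂μ = ∫⁻ y, ∫⁻ z, ∫⁻ x, f x y z ∂μ ∂ξ ∂ν := by
  have hxy : Measurable fun p : α × β ↦ ∫⁻ z, f p.1 p.2 z ∂ξ :=
    (hf.comp MeasurableEquiv.prodAssoc.measurable).lintegral_prod_right'
  have hxz (y : β) : Measurable fun p : α × γ ↦ f p.1 y p.2 :=
    hf.comp (measurable_fst.prodMk (measurable_const.prodMk measurable_snd))
  rw [lintegral_lintegral_swap hxy.aemeasurable]
  exact lintegral_congr fun y ↦ lintegral_lintegral_swap (hxz y).aemeasurable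

lemma setLIntegral_Ioi_zero_eq_mul_comp_mul_left (f : ℝ → ENNReal) {s : ℝ} (hs : 0 < s) :
    ∫⁻ t in Ioi 0, f t = ENNReal.ofReal s * ∫⁻ u in Ioi 0, f (s * u) := by
  have hemb : MeasurableEmbedding (s * ·) := measurableEmbedding_mulLeft₀ hs.ne'
  have hvol := Real.smul_map_volume_mul_left hs.ne'
  rw [abs_of_pos hs] at hvol
  calc
    ∫⁻ t in Ioi 0, f t
      = ∫⁻ t in Ioi 0, f t ∂(ENNReal.ofReal s • volume.map (s * ·)) := by rw [hvol]
    _ = ENNReal.ofReal s * ∫⁻ u in Ioi 0, f (s * u) := by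
      rw [Measure.restrict_smul, lintegral_smul_measure, hemb.restrict_map, hemb.lintegral_map,
        preimage_const_mul_Ioi₀ _ hs, zero_div, smul_eq_mul]

end Lebesgue

section GammaBeta

lemma lintegral_rpow_mul_exp_neg_mul_Ioi {a r : ℝ} (ha : 0 < a) (hr : 0 < r) :
    ∫⁻ t in Ioi 0, ENNReal.ofReal (t ^ (a - 1) * exp (-(r * t))) =
      ENNReal.ofReal (Gamma a * r ^ (-a)) := by
  have hval : ∫ t in Ioi 0, t ^ (a - 1) * exp (-(r * t)) = Gamma a * r ^ (-a) := by
    rw [integral_rpow_mul_exp_neg_mul_Ioi ha hr, one_div, inv_rpow hr.le, rpow_neg hr.le, mul_comm]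
  have hpos : 0 < Gamma a * r ^ (-a) := by positivity
  rw [← hval, ofReal_integral_eq_lintegral_ofReal]
  · exact Integrable.of_integral_ne_zero (hval ▸ hpos.ne')
  · filter_upwards [self_mem_ae_restrict measurableSet_Ioi] with t (ht : 0 < t)
    simp only [Pi.zero_apply]
    positivity

lemma lintegral_lintegral_rpow_mul_rpow_mul_exp_neg_Ioi {a b A B : ℝ}
    (ha : 0 < a) (hb : 0 < b) (hA : 0 < A) (hB : 0 < B) :
    ∫⁻ s in Ioi 0, ∫⁻ t in Ioi 0,
        ENNReal.ofReal (s ^ (a - 1) * t ^ (b - 1) * exp (-(s * A + t * B))) =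
      ENNReal.ofReal (Gamma a * Gamma b * (A ^ (-a) * B ^ (-b))) := by
  calc
    _ = ∫⁻ s in Ioi 0, ENNReal.ofReal (Gamma b * B ^ (-b) * (s ^ (a - 1) * exp (-(A * s)))) := by
      refine setLIntegral_congr_fun measurableSet_Ioi fun s (hs : 0 < s) ↦ ?_
      calc
        _ = ∫⁻ t in Ioi 0, ENNReal.ofReal
              (s ^ (a - 1) * exp (-(A * s)) * (t ^ (b - 1) * exp (-(B * t)))) := by
          refine lintegral_congr fun t ↦ congrArg _ ?_
          rw [neg_add, exp_add, mul_comm s A, mul_comm t B]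
          ring
        _ = _ := by
          rw [lintegral_ofReal_const_mul (by positivity), lintegral_rpow_mul_exp_neg_mul_Ioi hb hB,
            ← ENNReal.ofReal_mul (by positivity), mul_comm]
    _ = _ := by
      rw [lintegral_ofReal_const_mul (by positivity), lintegral_rpow_mul_exp_neg_mul_Ioi ha hA,
        ← ENNReal.ofReal_mul (by positivity)]
      ring_nf

lemma lintegral_rpow_mul_one_add_rpow_Ioi {p q : ℝ} (hp : 0 < p) (hq : 0 < q) :
    ∫⁻ u in Ioi 0, ENNReal.ofReal (u ^ (p - 1) * (1 + u) ^ (-(p + q))) =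
      ENNReal.ofReal (beta p q) := by
  have gamma_repr : ∀ u ∈ Ioi (0 : ℝ), ENNReal.ofReal (u ^ (p - 1) * (1 + u) ^ (-(p + q))) =
      ∫⁻ x in Ioi 0, ENNReal.ofReal
        (u ^ (p - 1) / Gamma (p + q) * (x ^ (p + q - 1) * exp (-((1 + u) * x)))) := by
    intro u (hu : 0 < u)
    rw [lintegral_ofReal_const_mul (by positivity),
      lintegral_rpow_mul_exp_neg_mul_Ioi (by positivity) (by positivity),
      ← ENNReal.ofReal_mul (by positivity)]
    field_simp
  have integral_u : ∀ x ∈ Ioi (0 : ℝ), ∫⁻ u in Ioi 0, ENNReal.ofReal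
        (u ^ (p - 1) / Gamma (p + q) * (x ^ (p + q - 1) * exp (-((1 + u) * x)))) =
      ENNReal.ofReal (Gamma p / Gamma (p + q) * (x ^ (q - 1) * exp (-(1 * x)))) := by
    intro x (hx : 0 < x)
    calc
      _ = ∫⁻ u in Ioi 0, ENNReal.ofReal (x ^ (p + q - 1) * exp (-x) / Gamma (p + q) *
            (u ^ (p - 1) * exp (-(x * u)))) := by
        refine lintegral_congr fun u ↦ congrArg _ ?_
        rw [show -((1 + u) * x) = -x + -(x * u) by ring, exp_add]
        ring
      _ = _ := by
        rw [lintegral_ofReal_const_mul (by positivity), lintegral_rpow_mul_exp_neg_mul_Ioi hp hx,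
          ← ENNReal.ofReal_mul (by positivity), one_mul,
          show q - 1 = p + q - 1 + -p by ring, rpow_add hx]
        ring_nf
  rw [setLIntegral_congr_fun measurableSet_Ioi gamma_repr, lintegral_lintegral_swap (by fun_prop),
    setLIntegral_congr_fun measurableSet_Ioi integral_u, lintegral_ofReal_const_mul (by positivity),
    lintegral_rpow_mul_exp_neg_mul_Ioi hq one_pos, ← ENNReal.ofReal_mul (by positivity),
    one_rpow, mul_one, div_mul_eq_mul_div, beta]

end GammaBeta

section OneLoop

variable {a b h : ℝ}

/-- The integrand left over the Schwinger parameters `s`, `t` of two propagators of exponents `a`,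
`b` after the loop momentum has been integrated out: `h` is half the dimension and `Q` the squared
external momentum. The factor `π ^ h` of the Gaussian integral is left out. -/
noncomputable def schwingerIntegrand (a b h Q s t : ℝ) : ℝ :=
  s ^ (a - 1) * t ^ (b - 1) * (s + t) ^ (-h) * exp (-(Q * (s * t / (s + t))))

lemma mul_schwingerIntegrand_self_mul {Q s u : ℝ} (hs : 0 < s) (hu : 0 < u) :
    s * schwingerIntegrand a b h Q s (s * u) =
      u ^ (b - 1) * (1 + u) ^ (-h) *
        (s ^ (a + b - h - 1) * exp (-(Q * (u / (1 + u)) * s))) := by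
  have hpow : s ^ (a + b - h - 1) = s * (s ^ (a - 1) * s ^ (b - 1) * s ^ (-h)) := by
    rw [show a + b - h - 1 = 1 + (a - 1 + (b - 1) + -h) by ring, rpow_add hs, rpow_add hs,
      rpow_add hs, rpow_one]
  have hexp : Q * (s * (s * u) / (s + s * u)) = Q * (u / (1 + u)) * s := by
    field_simp
  rw [schwingerIntegrand, hexp, hpow, mul_rpow hs.le hu.le, show s + s * u = s * (1 + u) by ring,
    mul_rpow hs.le (by positivity)]
  ring

lemma lintegral_lintegral_schwingerIntegrand {Q : ℝ} (hQ : 0 < Q) (ha : a < h) (hb : b < h)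
    (hab : h < a + b) :
    ∫⁻ s in Ioi 0, ∫⁻ t in Ioi 0, ENNReal.ofReal (schwingerIntegrand a b h Q s t) =
      ENNReal.ofReal (Gamma (a + b - h) * Q ^ (h - a - b) * beta (h - a) (h - b)) := by
  have scaling : ∀ s ∈ Ioi (0 : ℝ),
      ∫⁻ t in Ioi 0, ENNReal.ofReal (schwingerIntegrand a b h Q s t) =
        ∫⁻ u in Ioi 0, ENNReal.ofReal (u ^ (b - 1) * (1 + u) ^ (-h) *
          (s ^ (a + b - h - 1) * exp (-(Q * (u / (1 + u)) * s)))) := by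
    intro s (hs : 0 < s)
    rw [setLIntegral_Ioi_zero_eq_mul_comp_mul_left _ hs, ← lintegral_ofReal_const_mul hs.le]
    exact setLIntegral_congr_fun measurableSet_Ioi fun u (hu : 0 < u) ↦
      congrArg _ (mul_schwingerIntegrand_self_mul hs hu)
  have integral_s : ∀ u ∈ Ioi (0 : ℝ),
      ∫⁻ s in Ioi 0, ENNReal.ofReal (u ^ (b - 1) * (1 + u) ^ (-h) *
          (s ^ (a + b - h - 1) * exp (-(Q * (u / (1 + u)) * s)))) =
        ENNReal.ofReal (Gamma (a + b - h) * Q ^ (h - a - b) *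
          (u ^ (h - a - 1) * (1 + u) ^ (-(h - a + (h - b))))) := by
    intro u (hu : 0 < u)
    rw [lintegral_ofReal_const_mul (by positivity),
      lintegral_rpow_mul_exp_neg_mul_Ioi (sub_pos.2 hab) (by positivity),
      ← ENNReal.ofReal_mul (by positivity), mul_rpow hQ.le (by positivity),
      div_rpow hu.le (by positivity), show -(a + b - h) = h - a - b by ring,
      show h - a - 1 = b - 1 + (h - a - b) by ring, rpow_add hu,
      show -(h - a + (h - b)) = -h - (h - a - b) by ring, rpow_sub (by positivity) (-h)]
    congr 1
    ring
  rw [setLIntegral_congr_fun measurableSet_Ioi scaling, lintegral_lintegral_swap (by fun_prop),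
    setLIntegral_congr_fun measurableSet_Ioi integral_s, lintegral_ofReal_const_mul (by positivity),
    lintegral_rpow_mul_one_add_rpow_Ioi (sub_pos.2 ha) (sub_pos.2 hb),
    ← ENNReal.ofReal_mul (by positivity)]

/-- The value of the one-loop integral `∫ (‖k‖²)⁻ᵃ (‖k-q‖²)⁻ᵇ dk` in dimension `2h`, at
`‖q‖ = 1` and divided by `π ^ h`; physicists call it the `G`-function of the bubble diagram. -/
noncomputable def oneLoopCoeff (a b h : ℝ) : ℝ :=
  Gamma (a + b - h) * beta (h - a) (h - b) / (Gamma a * Gamma b)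

lemma oneLoopCoeff_pos (ha : a < h) (hb : b < h) (hab : h < a + b) :
    0 < oneLoopCoeff a b h :=
  div_pos (mul_pos (Gamma_pos_of_pos (sub_pos.2 hab)) (beta_pos (sub_pos.2 ha) (sub_pos.2 hb)))
    (mul_pos (Gamma_pos_of_pos (by linarith)) (Gamma_pos_of_pos (by linarith)))

lemma oneLoopCoeff_one_add_one_two {ρ : ℝ} (hρ₀ : 0 < ρ) (hρ₁ : ρ < 1) :
    oneLoopCoeff (1 + ρ) 1 2 = 1 / (ρ * (1 - ρ)) := by
  have hρ₁' : 0 < 1 - ρ := sub_pos.2 hρ₁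
  rw [oneLoopCoeff, beta, show 1 + ρ + 1 - 2 = ρ by ring, show 2 - (1 + ρ) = 1 - ρ by ring,
    show (2 : ℝ) - 1 = 1 by norm_num, Gamma_one, Gamma_add_one hρ₁'.ne', add_comm 1 ρ,
    Gamma_add_one hρ₀.ne']
  field_simp

variable {V : Type*} [NormedAddCommGroup V] [InnerProductSpace ℝ V]

lemma mul_norm_sq_add_mul_norm_sub_sq {s t : ℝ} (hst : s + t ≠ 0) (k q : V) :
    s * ‖k‖ ^ 2 + t * ‖k - q‖ ^ 2 =
      (s + t) * ‖k - (t / (s + t)) • q‖ ^ 2 + ‖q‖ ^ 2 * (s * t / (s + t)) := by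
  rw [norm_sub_sq_real, norm_sub_sq_real, inner_smul_right, norm_smul, mul_pow, norm_eq_abs, sq_abs]
  field_simp
  ring

variable [FiniteDimensional ℝ V] [MeasurableSpace V] [BorelSpace V]

lemma lintegral_exp_neg_mul_norm_sq_sub {r : ℝ} (hr : 0 < r) (c : V) :
    ∫⁻ k : V, ENNReal.ofReal (exp (-(r * ‖k - c‖ ^ 2))) =
      ENNReal.ofReal ((π / r) ^ (finrank ℝ V / 2 : ℝ)) := by
  have hval : ∫ k : V, exp (-(r * ‖k‖ ^ 2)) = (π / r) ^ (finrank ℝ V / 2 : ℝ) := by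
    simpa only [neg_mul] using GaussianFourier.integral_rexp_neg_mul_sq_norm (V := V) hr
  have hpos : 0 < (π / r) ^ (finrank ℝ V / 2 : ℝ) := by positivity
  rw [lintegral_sub_right_eq_self (fun k : V ↦ ENNReal.ofReal (exp (-(r * ‖k‖ ^ 2)))) c, ← hval,
    ofReal_integral_eq_lintegral_ofReal (.of_integral_ne_zero (hval ▸ hpos.ne'))
      (ae_of_all _ fun _ ↦ (exp_pos _).le)]

lemma lintegral_rpow_mul_rpow_mul_exp_neg_norm_sq {s t : ℝ} (hs : 0 < s) (ht : 0 < t) (q : V) :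
    ∫⁻ k : V, ENNReal.ofReal
        (s ^ (a - 1) * t ^ (b - 1) * exp (-(s * ‖k‖ ^ 2 + t * ‖k - q‖ ^ 2))) =
      ENNReal.ofReal (π ^ (finrank ℝ V / 2 : ℝ) *
        schwingerIntegrand a b (finrank ℝ V / 2) (‖q‖ ^ 2) s t) := by
  have hst : 0 < s + t := add_pos hs ht
  calc
    _ = ∫⁻ k : V, ENNReal.ofReal
          (s ^ (a - 1) * t ^ (b - 1) * exp (-(‖q‖ ^ 2 * (s * t / (s + t)))) *
            exp (-((s + t) * ‖k - (t / (s + t)) • q‖ ^ 2))) := by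
      refine lintegral_congr fun k ↦ congrArg _ ?_
      rw [mul_norm_sq_add_mul_norm_sub_sq hst.ne', neg_add, exp_add]
      ring
    _ = _ := by
      rw [lintegral_ofReal_const_mul (by positivity), lintegral_exp_neg_mul_norm_sq_sub hst,
        ← ENNReal.ofReal_mul (by positivity), div_rpow pi_pos.le hst.le, schwingerIntegrand,
        rpow_neg hst.le]
      ring_nf

theorem lintegral_norm_sq_rpow_mul_norm_sub_sq_rpow (ha : a < finrank ℝ V / 2)
    (hb : b < finrank ℝ V / 2) (hab : finrank ℝ V / 2 < a + b) {q : V} (hq : q ≠ 0) :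
    ∫⁻ k : V, ENNReal.ofReal ((‖k‖ ^ 2) ^ (-a) * (‖k - q‖ ^ 2) ^ (-b)) =
      ENNReal.ofReal (π ^ (finrank ℝ V / 2 : ℝ) * oneLoopCoeff a b (finrank ℝ V / 2) *
        (‖q‖ ^ 2) ^ (finrank ℝ V / 2 - a - b)) := by
  have : Nontrivial V := nontrivial_of_ne q 0 hq
  have ha₀ : 0 < a := by linarith
  have hb₀ : 0 < b := by linarith
  have hQ : 0 < ‖q‖ ^ 2 := by positivity
  have schwinger : ∀ᵐ k : V, ENNReal.ofReal ((‖k‖ ^ 2) ^ (-a) * (‖k - q‖ ^ 2) ^ (-b)) =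
      ENNReal.ofReal (Gamma a * Gamma b)⁻¹ * ∫⁻ s in Ioi 0, ∫⁻ t in Ioi 0, ENNReal.ofReal
        (s ^ (a - 1) * t ^ (b - 1) * exp (-(s * ‖k‖ ^ 2 + t * ‖k - q‖ ^ 2))) := by
    filter_upwards [Measure.ae_ne volume 0, Measure.ae_ne volume q] with k hk hkq
    have hkq' : k - q ≠ 0 := sub_ne_zero.2 hkq
    rw [lintegral_lintegral_rpow_mul_rpow_mul_exp_neg_Ioi ha₀ hb₀ (by positivity) (by positivity),
      ← ENNReal.ofReal_mul (by positivity), inv_mul_cancel_left₀ (by positivity)]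
  have gaussian : ∀ s ∈ Ioi (0 : ℝ), ∫⁻ t in Ioi 0, ∫⁻ k : V, ENNReal.ofReal
        (s ^ (a - 1) * t ^ (b - 1) * exp (-(s * ‖k‖ ^ 2 + t * ‖k - q‖ ^ 2))) =
      ENNReal.ofReal (π ^ (finrank ℝ V / 2 : ℝ)) * ∫⁻ t in Ioi 0, ENNReal.ofReal
        (schwingerIntegrand a b (finrank ℝ V / 2) (‖q‖ ^ 2) s t) := by
    intro s hs
    rw [← lintegral_ofReal_const_mul (by positivity)]
    exact setLIntegral_congr_fun measurableSet_Ioi fun t ht ↦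
      lintegral_rpow_mul_rpow_mul_exp_neg_norm_sq hs ht q
  rw [lintegral_congr_ae schwinger, lintegral_const_mul' _ _ ENNReal.ofReal_ne_top,
    lintegral_lintegral_lintegral_rotate (by fun_prop),
    setLIntegral_congr_fun measurableSet_Ioi gaussian,
    lintegral_const_mul' _ _ ENNReal.ofReal_ne_top,
    lintegral_lintegral_schwingerIntegrand hQ ha hb hab, ← ENNReal.ofReal_mul (by positivity),
    ← ENNReal.ofReal_mul (by positivity), oneLoopCoeff]
  ring_nf

theorem one_loop_mellin_transform_general (ha : a < finrank ℝ V / 2)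
    (hb : b < finrank ℝ V / 2) (hab : finrank ℝ V / 2 < a + b) {q : V} (hq : q ≠ 0) :
    Integrable (fun k : V ↦ (‖k‖ ^ 2) ^ (-a) * (‖k - q‖ ^ 2) ^ (-b)) ∧
    (‖q‖ ^ 2) ^ (a + b - finrank ℝ V / 2) * (π ^ (-(finrank ℝ V / 2) : ℝ) *
        ∫ k : V, (‖k‖ ^ 2) ^ (-a) * (‖k - q‖ ^ 2) ^ (-b)) =
      oneLoopCoeff a b (finrank ℝ V / 2) := by
  have hcoeff := oneLoopCoeff_pos ha hb hab
  have hmeas : AEStronglyMeasurable fun k : V ↦ (‖k‖ ^ 2) ^ (-a) * (‖k - q‖ ^ 2) ^ (-b) :=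
    Measurable.aestronglyMeasurable (by fun_prop)
  have hnonneg : 0 ≤ᵐ[volume] fun k : V ↦ (‖k‖ ^ 2) ^ (-a) * (‖k - q‖ ^ 2) ^ (-b) :=
    ae_of_all _ fun k ↦ mul_nonneg (by positivity) (by positivity)
  have hval := lintegral_norm_sq_rpow_mul_norm_sub_sq_rpow ha hb hab hq
  refine ⟨⟨hmeas, ?_⟩, ?_⟩
  · rw [hasFiniteIntegral_iff_ofReal hnonneg, hval]
    exact ENNReal.ofReal_lt_top
  · rw [integral_eq_lintegral_of_nonneg_ae hnonneg hmeas, hval,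
      ENNReal.toReal_ofReal (by positivity), rpow_neg pi_pos.le,
      show (finrank ℝ V / 2 : ℝ) - a - b = -(a + b - finrank ℝ V / 2) by ring,
      rpow_neg (by positivity)]
    field_simp

end OneLoop

/-- **The one-loop Mellin transform `F₁(ρ) = 1/(ρ(1−ρ))` (Euclidean version).**
For `0 < ρ < 1` and `q ≠ 0` in `ℝ⁴`, the function
`k ↦ (‖k‖²)^(−1−ρ) (‖k−q‖²)^(−1)` is integrable and
`(‖q‖²)^ρ · π⁻² ∫ (‖k‖²)^(−1−ρ) (‖k−q‖²)^(−1) dk = 1/(ρ(1−ρ))`. -/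
theorem one_loop_mellin_transform
    (ρ : ℝ) (hρ₀ : 0 < ρ) (hρ₁ : ρ < 1)
    (q : EuclideanSpace ℝ (Fin 4)) (hq : q ≠ 0) :
    Integrable (fun k : EuclideanSpace ℝ (Fin 4) =>
        (‖k‖ ^ 2 : ℝ) ^ (-1 - ρ) * (‖k - q‖ ^ 2 : ℝ) ^ (-1 : ℝ)) ∧
    (‖q‖ ^ 2 : ℝ) ^ ρ * (π ^ (-2 : ℝ) *
        (∫ k : EuclideanSpace ℝ (Fin 4),
          (‖k‖ ^ 2 : ℝ) ^ (-1 - ρ) * (‖k - q‖ ^ 2 : ℝ) ^ (-1 : ℝ))) =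
      1 / (ρ * (1 - ρ)) := by
  have hdim : (finrank ℝ (EuclideanSpace ℝ (Fin 4)) / 2 : ℝ) = 2 := by
    rw [finrank_euclideanSpace_fin]
    norm_num
  have general := one_loop_mellin_transform_general (a := 1 + ρ) (b := 1)
    (by linarith) (by linarith) (by linarith) hq
  rwa [hdim, oneLoopCoeff_one_add_one_two hρ₀ hρ₁, show 1 + ρ + 1 - 2 = ρ by ring, neg_add']
    at general
end

section
/- For every real ρ with 0 < ρ < 1 and every nonzero q ∈ ℝ⁴, the normalized one-loop Mellin transform F₁(ρ; q) := (‖q‖²)^{ρ} · π^{−2} · ∫_{ℝ⁴} (‖k‖²)^{−1−ρ} (‖k−q‖²)^{−1} dk does not depend on q and is invariant under the conformal reflection ρ ↦ 1 − ρ: for all nonzero q, q′ ∈ ℝ⁴, F₁(ρ; q) = F₁(1−ρ; q′). -/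
open MeasureTheory Real

/-- The normalized Euclidean one-loop Mellin transform
`F₁(ρ; q) = (‖q‖²)^ρ · π⁻² · ∫_{ℝ⁴} (‖k‖²)^(−1−ρ) (‖k−q‖²)^(−1) dk`. -/
noncomputable def F₁ (ρ : ℝ) (q : EuclideanSpace ℝ (Fin 4)) : ℝ :=
  (‖q‖ ^ 2 : ℝ) ^ ρ * (π ^ (-2 : ℝ) *
    ∫ k : EuclideanSpace ℝ (Fin 4),
      (‖k‖ ^ 2 : ℝ) ^ (-1 - ρ) * (‖k - q‖ ^ 2 : ℝ) ^ (-1 : ℝ))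

/-!
In dimension `n`, rotations and dilations determine the integral of `‖k‖ ^ a * ‖k - q‖ ^ b` up to
a factor depending only on `a`, `b` and `n`, and the prefactor in `F₁` cancels the resulting power
of `‖q‖`. The inversion in the sphere of radius `‖q‖` about the origin fixes `q` and multiplies
`‖k - q‖` by `‖q‖ / ‖k‖`; since its Jacobian is `(‖q‖ / ‖k‖) ^ (2 * n)`, it replaces `a` by
`-2 * n - a - b` and keeps `b`. For `n = 4`, `a = -2 - 2 * ρ` and `b = -2` this is `ρ ↦ 1 - ρ`.
-/

open EuclideanGeometry Module

section Inversion

variable {E : Type*} [NormedAddCommGroup E] [InnerProductSpace ℝ E]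

theorem norm_inversion_zero (R : ℝ) (x : E) : ‖inversion 0 R x‖ = R ^ 2 / ‖x‖ := by
  simpa using dist_inversion_center (0 : E) x R

theorem norm_inversion_zero_norm_sub {x q : E} (hx : x ≠ 0) (hq : q ≠ 0) :
    ‖inversion 0 ‖q‖ x - q‖ = ‖q‖ / ‖x‖ * ‖x - q‖ := by
  have hfix : inversion 0 ‖q‖ q = q := by simpa using inversion_dist_center (0 : E) q
  have hdist := dist_inversion_inversion hx hq ‖q‖
  rw [hfix] at hdist
  simp only [dist_eq_norm, sub_zero] at hdist
  rw [hdist]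
  field_simp

theorem image_inversion_compl_center (c : E) {R : ℝ} (hR : R ≠ 0) :
    inversion c R '' {c}ᶜ = {c}ᶜ := by
  rw [Set.image_compl_eq (inversion_bijective c hR), Set.image_singleton, inversion_self]

variable [FiniteDimensional ℝ E]

theorem abs_det_smul_linearIsometryEquiv (r : ℝ) (L : E ≃ₗᵢ[ℝ] E) :
    |(r • (L : E →L[ℝ] E)).det| = |r| ^ finrank ℝ E := by
  rw [ContinuousLinearMap.det, ← LinearMap.normDet_eq_abs_det,
    ContinuousLinearMap.toLinearMap_smul, LinearMap.normDet_smul, norm_eq_abs]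
  exact (congrArg _ L.toLinearIsometry.normDet_eq_one).trans (mul_one _)

theorem integral_div_dist_pow_smul_comp_inversion [Nontrivial E] [MeasurableSpace E] [BorelSpace E]
    {F : Type*} [NormedAddCommGroup F] [NormedSpace ℝ F]
    (μ : Measure E) [μ.IsAddHaarMeasure] (f : E → F) (c : E) {R : ℝ} (hR : R ≠ 0) :
    ∫ x, (R / dist x c) ^ (2 * finrank ℝ E) • f (inversion c R x) ∂μ = ∫ x, f x ∂μ := by
  have change_of_variables := integral_image_eq_integral_abs_det_fderiv_smul μ
    (measurableSet_singleton c).compl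
    (fun x hx => (hasFDerivAt_inversion (R := R) hx).hasFDerivWithinAt)
    (inversion_injective c hR).injOn f
  rw [image_inversion_compl_center c hR] at change_of_variables
  simpa only [abs_det_smul_linearIsometryEquiv, abs_pow, ← pow_mul, restrict_compl_singleton,
    (even_two_mul _).pow_abs] using change_of_variables.symm

end Inversion

theorem div_pow_mul_sq_div_rpow_mul_div_mul_rpow (n : ℕ) (a b : ℝ) {R x D : ℝ}
    (hR : 0 < R) (hx : 0 < x) (hD : 0 ≤ D) :
    (R / x) ^ (2 * n) * ((R ^ 2 / x) ^ a * (R / x * D) ^ b) =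
      R ^ (2 * n + 2 * a + b) * (x ^ (-(2 * n) - a - b) * D ^ b) := by
  rw [mul_rpow (by positivity) hD, div_rpow hR.le hx.le, div_rpow (sq_nonneg R) hx.le,
    ← rpow_natCast_mul hR.le, div_pow, rpow_add hR, rpow_add hR, rpow_sub hx, rpow_sub hx,
    rpow_neg hx.le]
  norm_cast
  field_simp

section BubbleIntegral

variable {E : Type*} [NormedAddCommGroup E] [InnerProductSpace ℝ E] [FiniteDimensional ℝ E]
  [MeasurableSpace E] [BorelSpace E]

/-- The massless one-loop two-point ("bubble") integral with external momentum `q`. The exponents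
are those of the norms, so the propagators `(‖k‖²)⁻ˢ` and `(‖k - q‖²)⁻ᵗ` are encoded by
`a = -2s` and `b = -2t`. By the convention for Bochner integrals its value is `0` wherever the
integral diverges. -/
noncomputable def bubbleIntegral (a b : ℝ) (q : E) : ℝ :=
  ∫ k : E, ‖k‖ ^ a * ‖k - q‖ ^ b

theorem bubbleIntegral_map (a b : ℝ) (L : E ≃ₗᵢ[ℝ] E) (q : E) :
    bubbleIntegral a b (L q) = bubbleIntegral a b q := by
  unfold bubbleIntegral
  rw [← L.measurePreserving.integral_comp L.toHomeomorph.measurableEmbedding]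
  simp only [← map_sub, L.norm_map]

theorem bubbleIntegral_congr_norm (a b : ℝ) {q q' : E} (h : ‖q‖ = ‖q'‖) :
    bubbleIntegral a b q = bubbleIntegral a b q' := by
  rw [← Submodule.reflection_sub h, bubbleIntegral_map]

theorem bubbleIntegral_smul (a b : ℝ) {c : ℝ} (hc : c ≠ 0) (q : E) :
    bubbleIntegral a b (c • q) = |c| ^ (finrank ℝ E + a + b) * bubbleIntegral a b q := by
  have hc' : 0 < |c| := abs_pos.2 hc
  have hscale := Measure.integral_comp_smul volume (fun k : E => ‖k‖ ^ a * ‖k - c • q‖ ^ b) c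
  have homogeneous (k : E) :
      ‖c • k‖ ^ a * ‖c • k - c • q‖ ^ b = |c| ^ (a + b) * (‖k‖ ^ a * ‖k - q‖ ^ b) := by
    rw [← smul_sub, norm_smul, norm_smul, norm_eq_abs, mul_rpow hc'.le (norm_nonneg _),
      mul_rpow hc'.le (norm_nonneg _), rpow_add hc']
    ring
  simp only [homogeneous, integral_const_mul, abs_inv, abs_pow, smul_eq_mul] at hscale
  rw [add_assoc, rpow_add hc', rpow_natCast, mul_assoc]
  exact (eq_inv_mul_iff_mul_eq₀ (pow_pos hc' _).ne').1 hscale |>.symm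

theorem bubbleIntegral_eq_norm_div_rpow_mul (a b : ℝ) {q q' : E} (hq : q ≠ 0) (hq' : q' ≠ 0) :
    bubbleIntegral a b q' = (‖q'‖ / ‖q‖) ^ (finrank ℝ E + a + b) * bubbleIntegral a b q := by
  have hpos : 0 < ‖q'‖ / ‖q‖ := div_pos (norm_pos_iff.2 hq') (norm_pos_iff.2 hq)
  have hnorm : ‖(‖q'‖ / ‖q‖) • q‖ = ‖q'‖ := by
    rw [norm_smul, norm_of_nonneg hpos.le, div_mul_cancel₀ _ (norm_ne_zero_iff.2 hq)]
  rw [← bubbleIntegral_congr_norm a b hnorm, bubbleIntegral_smul a b hpos.ne', abs_of_pos hpos]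

theorem bubbleIntegral_inversion (a b : ℝ) {q : E} (hq : q ≠ 0) :
    bubbleIntegral a b q = ‖q‖ ^ (2 * finrank ℝ E + 2 * a + b) *
      bubbleIntegral (-(2 * finrank ℝ E) - a - b) b q := by
  have : Nontrivial E := ⟨q, 0, hq⟩
  unfold bubbleIntegral
  rw [← integral_div_dist_pow_smul_comp_inversion volume (fun k : E => ‖k‖ ^ a * ‖k - q‖ ^ b) 0
    (norm_ne_zero_iff.2 hq), ← integral_const_mul]
  refine integral_congr_ae ?_
  filter_upwards [Measure.ae_ne volume (0 : E)] with k hk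
  rw [smul_eq_mul, dist_zero_right, norm_inversion_zero, norm_inversion_zero_norm_sub hk hq]
  exact div_pow_mul_sq_div_rpow_mul_div_mul_rpow _ a b (norm_pos_iff.2 hq) (norm_pos_iff.2 hk)
    (norm_nonneg _)

end BubbleIntegral

theorem F₁_eq_bubbleIntegral (ρ : ℝ) (q : EuclideanSpace ℝ (Fin 4)) :
    F₁ ρ q = ‖q‖ ^ (2 * ρ) * (π ^ (-2 : ℝ) * bubbleIntegral (-2 - 2 * ρ) (-2) q) := by
  have sq_rpow (v : EuclideanSpace ℝ (Fin 4)) (s : ℝ) : (‖v‖ ^ 2) ^ s = ‖v‖ ^ (2 * s) := by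
    exact_mod_cast (rpow_natCast_mul (norm_nonneg v) 2 s).symm
  simp only [F₁, bubbleIntegral, sq_rpow]
  ring_nf

theorem F₁_eq_of_ne_zero (ρ : ℝ) {q q' : EuclideanSpace ℝ (Fin 4)} (hq : q ≠ 0) (hq' : q' ≠ 0) :
    F₁ ρ q = F₁ ρ q' := by
  have hpos : 0 < ‖q‖ := norm_pos_iff.2 hq
  have hpos' : 0 < ‖q'‖ := norm_pos_iff.2 hq'
  have hratio : ‖q'‖ ^ (2 * ρ) * (‖q'‖ / ‖q‖) ^ (-(2 * ρ)) = ‖q‖ ^ (2 * ρ) := by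
    rw [rpow_neg (by positivity), div_rpow hpos'.le hpos.le, inv_div,
      mul_div_cancel₀ _ (rpow_pos_of_pos hpos' _).ne']
  have hscaling : bubbleIntegral (-2 - 2 * ρ) (-2) q' =
      (‖q'‖ / ‖q‖) ^ (-(2 * ρ)) * bubbleIntegral (-2 - 2 * ρ) (-2) q := by
    rw [bubbleIntegral_eq_norm_div_rpow_mul _ _ hq hq', finrank_euclideanSpace_fin]
    push_cast
    ring_nf
  rw [F₁_eq_bubbleIntegral, F₁_eq_bubbleIntegral, hscaling, ← hratio]
  ring

theorem F₁_one_sub (ρ : ℝ) {q : EuclideanSpace ℝ (Fin 4)} (hq : q ≠ 0) :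
    F₁ (1 - ρ) q = F₁ ρ q := by
  have hprefactor : ‖q‖ ^ (2 * (1 - ρ)) = ‖q‖ ^ (2 * ρ) * ‖q‖ ^ (2 - 4 * ρ) := by
    rw [← rpow_add (norm_pos_iff.2 hq)]
    ring_nf
  have hinversion : bubbleIntegral (-2 - 2 * ρ) (-2) q =
      ‖q‖ ^ (2 - 4 * ρ) * bubbleIntegral (-2 - 2 * (1 - ρ)) (-2) q := by
    rw [bubbleIntegral_inversion _ _ hq, finrank_euclideanSpace_fin]
    push_cast
    ring_nf
  rw [F₁_eq_bubbleIntegral, F₁_eq_bubbleIntegral, hprefactor, hinversion]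
  ring

/-- **Conformal symmetry `ρ ↦ 1−ρ` of the one-loop Mellin transform.**
For `0 < ρ < 1`, the normalized Mellin transform `F₁(ρ; q)` does not depend on
the nonzero external momentum `q` and is invariant under `ρ ↦ 1 − ρ`. -/
theorem one_loop_mellin_conformal_symmetry
    (ρ : ℝ) (hρ₀ : 0 < ρ) (hρ₁ : ρ < 1)
    (q q' : EuclideanSpace ℝ (Fin 4)) (hq : q ≠ 0) (hq' : q' ≠ 0) :
    F₁ ρ q = F₁ (1 - ρ) q' :=
  calc
    F₁ ρ q = F₁ ρ q' := F₁_eq_of_ne_zero ρ hq hq'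
    _ = F₁ (1 - ρ) q' := (F₁_one_sub ρ hq').symm
end

section
/- For every real x with 0 < |x| < 1, 4 · Σ_{n=1}^{∞} n · ζ(2n+1) · (1 − 4^{−n}) · x^{2n−2} = (1/x) · Σ_{k=1}^{∞} [ 1/(k−x)² − 1/(k+x)² ] − (1/(2x)) · Σ_{k=1}^{∞} [ 1/(k−x/2)² − 1/(k+x/2)² ]. Equivalently, 4 Σ_{n≥1} n ζ(2n+1) (1 − 2^{−2n}) x^{2n−2} = −(1/x)[ψ′(1+x) − ψ′(1−x)] + (1/(2x))[ψ′(1+x/2) − ψ′(1−x/2)]. -/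
/-- The Riemann zeta value `ζ(s) = ∑_{k=1}^∞ k^(−s)` for a natural exponent `s`. -/
noncomputable def zetaR (s : ℕ) : ℝ := ∑' k : ℕ, 1 / ((k : ℝ) + 1) ^ s

/-- The trigamma function `ψ′(z) = ∑_{m=0}^∞ 1/(m+z)²`. -/
noncomputable def trigamma (z : ℝ) : ℝ := ∑' m : ℕ, 1 / ((m : ℝ) + z) ^ 2

/-!
Expanding each term of `∑ 1 / (m + z - y) ^ 2` in powers of `y / (m + z)` and interchanging the two
sums gives the Taylor series of the trigamma function at `z`. At `z = 1` its coefficients are zeta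
values, and the odd part in `y` is `4 y ∑ (n + 1) ζ(2 n + 3) y ^ (2 n)`. Since
`(x / 2) ^ (2 n) / 4 = x ^ (2 n) / 4 ^ (n + 1)`, the factor `1 - 4 ^ (-(n + 1))` comes from
combining this series at `y = x` and at `y = x / 2`.
-/

theorem hasSum_succ_mul_pow_div_pow {𝕜 : Type*} [NormedField 𝕜] [HasSummableGeomSeries 𝕜]
    {t y : 𝕜} (h : ‖y‖ < ‖t‖) :
    HasSum (fun n : ℕ => ((n : 𝕜) + 1) * y ^ n / t ^ (n + 2)) (1 / (t - y) ^ 2) := by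
  have ht : t ≠ 0 := norm_pos_iff.1 ((norm_nonneg y).trans_lt h)
  have hr : ‖y / t‖ < 1 := by rwa [norm_div, div_lt_one (norm_pos_iff.2 ht)]
  convert! (hasSum_choose_mul_geometric_of_norm_lt_one 1 hr).mul_left (1 / t ^ 2) using 1
  · funext n
    rw [Nat.choose_one_right, div_pow, pow_add]
    push_cast
    field_simp
  · rw [one_sub_div ht, div_pow]
    field_simp

theorem summable_one_div_nat_add_sq (z : ℝ) : Summable fun m : ℕ => 1 / ((m : ℝ) + z) ^ 2 := by
  simpa using (Real.summable_one_div_nat_add_rpow z 2).2 one_lt_two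

theorem summable_succ_mul_pow_div_nat_add_pow {z y : ℝ} (h : |y| < z) :
    Summable fun p : ℕ × ℕ => ((p.2 : ℝ) + 1) * y ^ p.2 / ((p.1 : ℝ) + z) ^ (p.2 + 2) := by
  have hz : 0 < z := (abs_nonneg y).trans_lt h
  have h_geom : Summable fun n : ℕ => ((n : ℝ) + 1) * |y| ^ n / z ^ n := by
    have h_norm : ‖|y|‖ < ‖z‖ := by simpa [abs_of_pos hz] using h
    refine ((hasSum_succ_mul_pow_div_pow h_norm).summable.mul_right (z ^ 2)).congr fun n => ?_
    rw [pow_add]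
    field_simp
  refine .of_norm_bounded ((summable_one_div_nat_add_sq z).mul_of_nonneg h_geom
    (fun m => by positivity) (fun n => by positivity)) fun ⟨m, n⟩ => ?_
  have hmz : z ≤ (m : ℝ) + z := le_add_of_nonneg_left m.cast_nonneg
  calc ‖((n : ℝ) + 1) * y ^ n / ((m : ℝ) + z) ^ (n + 2)‖
      = 1 / ((m : ℝ) + z) ^ 2 * (((n : ℝ) + 1) * |y| ^ n / ((m : ℝ) + z) ^ n) := by
        rw [norm_div, norm_mul, norm_pow, norm_pow, Real.norm_eq_abs y,
          Real.norm_of_nonneg (by positivity : 0 ≤ (n : ℝ) + 1),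
          Real.norm_of_nonneg (by positivity : 0 ≤ (m : ℝ) + z), pow_add]
        field_simp
    _ ≤ 1 / ((m : ℝ) + z) ^ 2 * (((n : ℝ) + 1) * |y| ^ n / z ^ n) := by gcongr

theorem hasSum_trigamma_sub {z y : ℝ} (h : |y| < z) :
    HasSum (fun n : ℕ => ((n : ℝ) + 1) * (∑' m : ℕ, 1 / ((m : ℝ) + z) ^ (n + 2)) * y ^ n)
      (trigamma (z - y)) := by
  have h_double := summable_succ_mul_pow_div_nat_add_pow h
  have h_row (m : ℕ) : HasSum (fun n : ℕ => ((n : ℝ) + 1) * y ^ n / ((m : ℝ) + z) ^ (n + 2))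
      (1 / ((m : ℝ) + (z - y)) ^ 2) := by
    rw [← add_sub_assoc]
    refine hasSum_succ_mul_pow_div_pow (h.trans_le ?_)
    exact (le_add_of_nonneg_left m.cast_nonneg).trans (le_abs_self _)
  have h_column (n : ℕ) : ∑' m : ℕ, ((n : ℝ) + 1) * y ^ n / ((m : ℝ) + z) ^ (n + 2) =
      ((n : ℝ) + 1) * (∑' m : ℕ, 1 / ((m : ℝ) + z) ^ (n + 2)) * y ^ n := by
    rw [mul_right_comm, ← tsum_mul_left]
    simp only [mul_one_div]
  have h_total : ∑' p : ℕ × ℕ, ((p.2 : ℝ) + 1) * y ^ p.2 / ((p.1 : ℝ) + z) ^ (p.2 + 2) =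
      trigamma (z - y) := (h_double.hasSum.prod_fiberwise h_row).tsum_eq.symm
  have h_swap := (Equiv.prodComm ℕ ℕ).hasSum_iff.2 (h_total ▸ h_double.hasSum)
  simpa only [Prod.swap_prod_mk, h_column] using
    h_swap.prod_fiberwise fun n => (h_double.prod_symm.prod_factor n).hasSum

theorem hasSum_trigamma_one_sub {y : ℝ} (h : |y| < 1) :
    HasSum (fun n : ℕ => ((n : ℝ) + 1) * zetaR (n + 2) * y ^ n) (trigamma (1 - y)) :=
  hasSum_trigamma_sub h

theorem hasSum_trigamma_one_sub_sub_trigamma_one_add {y : ℝ} (h : |y| < 1) :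
    HasSum (fun n : ℕ => 4 * y * (((n : ℝ) + 1) * zetaR (2 * n + 3) * y ^ (2 * n)))
      (trigamma (1 - y) - trigamma (1 + y)) := by
  have h_neg := hasSum_trigamma_one_sub (y := -y) (by rwa [abs_neg])
  rw [sub_neg_eq_add] at h_neg
  have h_diff := (hasSum_trigamma_one_sub h).sub h_neg
  have h_odd_injective : Function.Injective fun n : ℕ => 2 * n + 1 := fun a b hab => by
    simpa using hab
  rw [← h_odd_injective.hasSum_iff] at h_diff
  · convert! h_diff using 2 with n
    rw [Function.comp_apply, (odd_two_mul_add_one n).neg_pow, pow_succ]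
    push_cast
    ring
  · intro n hn
    have h_even : Even n := Nat.not_odd_iff_even.1 fun ⟨m, hm⟩ => hn ⟨m, hm.symm⟩
    rw [h_even.neg_pow, sub_self]

theorem hasSum_succ_mul_zetaR_mul_pow {y : ℝ} (hy₀ : y ≠ 0) (hy₁ : |y| < 1) :
    HasSum (fun n : ℕ => ((n : ℝ) + 1) * zetaR (2 * n + 3) * y ^ (2 * n))
      ((trigamma (1 - y) - trigamma (1 + y)) / (4 * y)) := by
  have hy : 4 * y ≠ 0 := mul_ne_zero four_ne_zero hy₀
  simpa only [mul_div_cancel_left₀ _ hy] using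
    (hasSum_trigamma_one_sub_sub_trigamma_one_add hy₁).div_const (4 * y)

theorem hasSum_two_loop_mellin {x : ℝ} (hx₀ : x ≠ 0) (hx₁ : |x| < 1) :
    HasSum (fun n : ℕ => ((n : ℝ) + 1) * zetaR (2 * n + 3) * (1 - 1 / (4 : ℝ) ^ (n + 1)) *
        x ^ (2 * n))
      ((trigamma (1 - x) - trigamma (1 + x)) / (4 * x) -
        (trigamma (1 - x / 2) - trigamma (1 + x / 2)) / (8 * x)) := by
  have h_half : |x / 2| < 1 := by
    rw [abs_div, abs_two]
    linarith [abs_nonneg x]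
  have h_series_half := hasSum_succ_mul_zetaR_mul_pow (div_ne_zero hx₀ two_ne_zero) h_half
  convert! (hasSum_succ_mul_zetaR_mul_pow hx₀ hx₁).sub (h_series_half.mul_left (1 / 4)) using 1
  · funext n
    have h_four : (2 : ℝ) ^ (2 * n) = 4 ^ n := by
      rw [pow_mul]
      norm_num
    rw [div_pow, h_four, pow_succ]
    field_simp
  · field_simp
    ring

theorem tsum_one_div_sub_sq_sub_one_div_add_sq (y : ℝ) :
    ∑' k : ℕ, (1 / (((k : ℝ) + 1) - y) ^ 2 - 1 / (((k : ℝ) + 1) + y) ^ 2) =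
      trigamma (1 - y) - trigamma (1 + y) := by
  simp only [trigamma, add_sub_assoc, add_assoc]
  exact (summable_one_div_nat_add_sq _).tsum_sub (summable_one_div_nat_add_sq _)

/-- **The two-loop Mellin series via trigamma differences.**
For `0 < |x| < 1`,
`4 ∑_{n≥1} n ζ(2n+1)(1−4^(−n)) x^(2n−2)
  = (1/x) ∑_{k≥1}[1/(k−x)² − 1/(k+x)²] − (1/(2x)) ∑_{k≥1}[1/(k−x/2)² − 1/(k+x/2)²]`,
equivalently
`= −(1/x)[ψ′(1+x) − ψ′(1−x)] + (1/(2x))[ψ′(1+x/2) − ψ′(1−x/2)]`.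
(The sums over `n ≥ 1` and `k ≥ 1` are indexed by `n+1`, `k+1` for `n k : ℕ`.) -/
theorem two_loop_mellin_series_eq_trigamma (x : ℝ) (hx₀ : x ≠ 0) (hx₁ : |x| < 1) :
    (4 * ∑' n : ℕ, ((n : ℝ) + 1) * zetaR (2 * n + 3) *
          (1 - 1 / (4 : ℝ) ^ (n + 1)) * x ^ (2 * n) =
      (1 / x) * ∑' k : ℕ,
          (1 / (((k : ℝ) + 1) - x) ^ 2 - 1 / (((k : ℝ) + 1) + x) ^ 2) -
        (1 / (2 * x)) * ∑' k : ℕ,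
          (1 / (((k : ℝ) + 1) - x / 2) ^ 2 - 1 / (((k : ℝ) + 1) + x / 2) ^ 2)) ∧
    (4 * ∑' n : ℕ, ((n : ℝ) + 1) * zetaR (2 * n + 3) *
          (1 - 1 / (4 : ℝ) ^ (n + 1)) * x ^ (2 * n) =
      -(1 / x) * (trigamma (1 + x) - trigamma (1 - x)) +
        (1 / (2 * x)) * (trigamma (1 + x / 2) - trigamma (1 - x / 2))) := by
  rw [(hasSum_two_loop_mellin hx₀ hx₁).tsum_eq, tsum_one_div_sub_sq_sub_one_div_add_sq,
    tsum_one_div_sub_sq_sub_one_div_add_sq]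
  constructor <;> field
end

section
/- Define for γ ∈ (0,1) the two-loop bracket B(γ) := 1/(γ²(1−γ)²) − 4 · Σ_{n=1}^{∞} n · ζ(2n+1) · (1 − 4^{−n}) · [ γ^{2n−2} + (1−γ)^{2n−2} ]. Then the apparent second-order poles of B at the endpoints are only first-order poles: lim_{γ → 0⁺} γ · B(γ) = 1 and lim_{γ → 1⁻} (1−γ) · B(γ) = 1. -/
open Filter Topology

/-- The two-loop bracket
`B(γ) = 1/(γ²(1−γ)²) − 4 ∑_{n≥1} n ζ(2n+1)(1−4^(−n)) [γ^(2n−2) + (1−γ)^(2n−2)]`.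
(The sum over `n ≥ 1` is indexed by `n+1` for `n : ℕ`.) -/
noncomputable def twoLoopBracket (γ : ℝ) : ℝ :=
  1 / (γ ^ 2 * (1 - γ) ^ 2) -
    4 * ∑' n : ℕ, ((n : ℝ) + 1) * zetaR (2 * n + 3) *
      (1 - 1 / (4 : ℝ) ^ (n + 1)) * (γ ^ (2 * n) + (1 - γ) ^ (2 * n))

/-!
The factor `ζ(2n+3)(1 - 4^(-n-1))` tends to `1` geometrically, so `∑ aₙ tⁿ`, where `aₙ` is `n + 1`
times that factor, differs from `∑ (n + 1) tⁿ = 1/(1 - t)²` by a power series that converges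
absolutely, hence is continuous, on the closed unit disc. At `t = (1 - γ)²` the double pole becomes
`1/(γ²(2 - γ)²)`, and `γ (1/(γ²(1 - γ)²) - 4/(γ²(2 - γ)²))` is regular at `γ = 0` with value `1`.
Invariance of the bracket under `γ ↦ 1 - γ` gives the other endpoint.
-/

section PowerSeries

variable {𝕜 : Type*} [NormedField 𝕜]

lemma norm_mul_pow_le_of_norm_le_one (c : 𝕜) {t : 𝕜} (ht : ‖t‖ ≤ 1) (n : ℕ) :
    ‖c * t ^ n‖ ≤ ‖c‖ := by
  rw [norm_mul, norm_pow]
  exact mul_le_of_le_one_right (norm_nonneg c) (pow_le_one₀ (norm_nonneg t) ht)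

variable [CompleteSpace 𝕜]

lemma continuousOn_tsum_mul_pow {c : ℕ → 𝕜} (hc : Summable fun n ↦ ‖c n‖) :
    ContinuousOn (fun t ↦ ∑' n, c n * t ^ n) (Metric.closedBall 0 1) :=
  continuousOn_tsum (fun _ ↦ by fun_prop) hc fun n _ ht ↦
    norm_mul_pow_le_of_norm_le_one (c n) (mem_closedBall_zero_iff.mp ht) n

/-- The power series `∑ (aₙ - (n + 1)) tⁿ`, which is what remains of `∑ aₙ tⁿ` once the double pole
`1 / (1 - t)² = ∑ (n + 1) tⁿ` is subtracted. -/
noncomputable def doublePoleRemainder (a : ℕ → 𝕜) (t : 𝕜) : 𝕜 :=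
  ∑' n, (a n - (n + 1)) * t ^ n

variable {a : ℕ → 𝕜}

lemma continuousOn_doublePoleRemainder (ha : Summable fun n ↦ ‖a n - (n + 1)‖) :
    ContinuousOn (doublePoleRemainder a) (Metric.closedBall 0 1) :=
  continuousOn_tsum_mul_pow ha

lemma hasSum_mul_pow_doublePole (ha : Summable fun n ↦ ‖a n - (n + 1)‖)
    {t : 𝕜} (ht : ‖t‖ < 1) :
    HasSum (fun n ↦ a n * t ^ n) (1 / (1 - t) ^ 2 + doublePoleRemainder a t) := by
  have hpole : HasSum (fun n : ℕ ↦ ((n : 𝕜) + 1) * t ^ n) (1 / (1 - t) ^ 2) := by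
    simpa using hasSum_choose_mul_geometric_of_norm_lt_one 1 ht
  have hremainder : Summable fun n ↦ (a n - (n + 1)) * t ^ n :=
    .of_norm_bounded ha fun n ↦ norm_mul_pow_le_of_norm_le_one _ ht.le n
  refine (hpole.add hremainder.hasSum).congr_fun fun n ↦ ?_
  ring

end PowerSeries

section Endpoint

lemma mul_doublePole_sub_doublePole_eq {𝕜 : Type*} [Field 𝕜] {γ : 𝕜} (h0 : γ ≠ 0)
    (h1 : 1 - γ ≠ 0) (h2 : 2 - γ ≠ 0) :
    γ * (1 / (γ ^ 2 * (1 - γ) ^ 2) - 4 * (1 / (1 - (1 - γ) ^ 2) ^ 2)) =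
      (4 - 3 * γ) / ((1 - γ) ^ 2 * (2 - γ) ^ 2) := by
  have hfactor : 1 - (1 - γ) ^ 2 = γ * (2 - γ) := by ring
  rw [hfactor]
  field_simp
  ring

variable {a : ℕ → ℝ}

lemma mul_doublePole_sub_tsum_eq (ha : Summable fun n ↦ ‖a n - (n + 1)‖)
    {γ : ℝ} (hγ : γ ∈ Set.Ioo 0 1) :
    γ * (1 / (γ ^ 2 * (1 - γ) ^ 2) - 4 * ∑' n, a n * (γ ^ (2 * n) + (1 - γ) ^ (2 * n))) =
      (4 - 3 * γ) / ((1 - γ) ^ 2 * (2 - γ) ^ 2) - 4 * γ * (1 / (1 - γ ^ 2) ^ 2 +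
        doublePoleRemainder a (γ ^ 2) + doublePoleRemainder a ((1 - γ) ^ 2)) := by
  obtain ⟨h0, h1⟩ := hγ
  have hsum_sq {x : ℝ} (hx0 : 0 < x) (hx1 : x < 1) :
      HasSum (fun n ↦ a n * x ^ (2 * n)) (1 / (1 - x ^ 2) ^ 2 + doublePoleRemainder a (x ^ 2)) := by
    simpa only [pow_mul] using hasSum_mul_pow_doublePole ha (t := x ^ 2)
      (by rw [Real.norm_of_nonneg (sq_nonneg x)]; exact pow_lt_one₀ hx0.le hx1 two_ne_zero)
  have hsum := (hsum_sq h0 h1).add (hsum_sq (sub_pos.mpr h1) (sub_lt_self 1 h0))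
  simp only [← mul_add] at hsum
  rw [hsum.tsum_eq, ← mul_doublePole_sub_doublePole_eq h0.ne' (by linarith) (by linarith)]
  ring

lemma tendsto_mul_doublePole_sub_tsum (ha : Summable fun n ↦ ‖a n - (n + 1)‖) :
    Tendsto (fun γ : ℝ ↦ γ * (1 / (γ ^ 2 * (1 - γ) ^ 2) -
      4 * ∑' n, a n * (γ ^ (2 * n) + (1 - γ) ^ (2 * n)))) (𝓝[>] 0) (𝓝 1) := by
  have hremainder : ContinuousOn (fun x : ℝ ↦ doublePoleRemainder a (x ^ 2)) (Set.Icc 0 1) :=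
    (continuousOn_doublePoleRemainder ha).comp (by fun_prop) fun x hx ↦ by
      simpa [abs_of_nonneg hx.1] using hx.2
  have hremainder_one_sub :
      ContinuousOn (fun γ : ℝ ↦ doublePoleRemainder a ((1 - γ) ^ 2)) (Set.Icc 0 1) :=
    hremainder.comp (by fun_prop) fun _ ↦ Set.Icc.one_sub_mem
  have hmem : (0 : ℝ) ∈ Set.Icc 0 1 := Set.left_mem_Icc.mpr zero_le_one
  have hregular : ContinuousWithinAt (fun γ : ℝ ↦
      (4 - 3 * γ) / ((1 - γ) ^ 2 * (2 - γ) ^ 2) - 4 * γ * (1 / (1 - γ ^ 2) ^ 2 +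
        doublePoleRemainder a (γ ^ 2) + doublePoleRemainder a ((1 - γ) ^ 2))) (Set.Icc 0 1) 0 := by
    have := hremainder 0 hmem
    have := hremainder_one_sub 0 hmem
    fun_prop (disch := norm_num)
  rw [← nhdsWithin_Ioo_eq_nhdsGT zero_lt_one]
  exact tendsto_nhdsWithin_congr (fun γ hγ ↦ (mul_doublePole_sub_tsum_eq ha hγ).symm) <| by
    simpa [show (4 : ℝ) / 2 ^ 2 = 1 by norm_num] using
      (hregular.mono Set.Ioo_subset_Icc_self).tendsto

end Endpoint

lemma summable_one_div_nat_add_nat_pow (m : ℕ) {s : ℕ} (hs : 1 < s) :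
    Summable fun k : ℕ ↦ 1 / ((k : ℝ) + m) ^ s := by
  simpa only [Nat.cast_add] using
    (summable_nat_add_iff m).mpr (Real.summable_one_div_nat_pow.mpr hs)

lemma zetaR_eq_one_add_tsum {s : ℕ} (hs : 1 < s) :
    zetaR s = 1 + ∑' k : ℕ, 1 / ((k : ℝ) + 2) ^ s := by
  have hsummable : Summable fun k : ℕ ↦ 1 / ((k : ℝ) + 1) ^ s := by
    simpa only [Nat.cast_one] using summable_one_div_nat_add_nat_pow 1 hs
  rw [zetaR, hsummable.tsum_eq_zero_add]
  norm_num [add_assoc]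

lemma one_le_zetaR {s : ℕ} (hs : 1 < s) : 1 ≤ zetaR s := by
  rw [zetaR_eq_one_add_tsum hs]
  exact le_add_of_nonneg_right (tsum_nonneg fun k ↦ by positivity)

lemma zetaR_add_two_sub_one_le (m : ℕ) : zetaR (m + 2) - 1 ≤ (zetaR 2 - 1) / 2 ^ m := by
  have hsummable {s : ℕ} (hs : 1 < s) : Summable fun k : ℕ ↦ 1 / ((k : ℝ) + 2) ^ s := by
    simpa only [Nat.cast_ofNat] using summable_one_div_nat_add_nat_pow 2 hs
  rw [zetaR_eq_one_add_tsum (by lia), zetaR_eq_one_add_tsum one_lt_two, add_sub_cancel_left,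
    add_sub_cancel_left, ← tsum_div_const]
  refine (hsummable (by lia)).tsum_le_tsum (fun k ↦ ?_) ((hsummable one_lt_two).div_const _)
  rw [div_div, pow_add, mul_comm]
  gcongr
  linarith [k.cast_nonneg (α := ℝ)]

lemma abs_zetaR_mul_sub_one_le (n : ℕ) :
    |zetaR (2 * n + 3) * (1 - 1 / 4 ^ (n + 1)) - 1| ≤ zetaR 2 * (1 / 4) ^ n := by
  have hζ_two : 1 ≤ zetaR 2 := one_le_zetaR one_lt_two
  have hζ_lower : 1 ≤ zetaR (2 * n + 3) := one_le_zetaR (by lia)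
  have hζ_upper : zetaR (2 * n + 3) - 1 ≤ (zetaR 2 - 1) * (1 / 4) ^ n := by
    refine (zetaR_add_two_sub_one_le (2 * n + 1)).trans ?_
    rw [div_eq_mul_one_div, one_div_pow]
    gcongr
    calc (4 : ℝ) ^ n = 2 ^ (2 * n) := by rw [pow_mul]; norm_num
      _ ≤ 2 ^ (2 * n + 1) := pow_le_pow_right₀ one_le_two (by lia)
  have hpow : (1 : ℝ) / 4 ^ (n + 1) = (1 / 4) ^ n / 4 := by
    rw [← one_div_pow, pow_succ]
    ring
  have hq_pos : (0 : ℝ) < (1 / 4) ^ n := by positivity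
  have hq_le_one : (1 / 4 : ℝ) ^ n ≤ 1 := pow_le_one₀ (by norm_num) (by norm_num)
  rw [hpow, abs_le]
  constructor
  · calc -(zetaR 2 * (1 / 4) ^ n) ≤ 1 * (1 - (1 / 4) ^ n / 4) - 1 := by nlinarith
      _ ≤ zetaR (2 * n + 3) * (1 - (1 / 4) ^ n / 4) - 1 := by gcongr; linarith
  · calc zetaR (2 * n + 3) * (1 - (1 / 4) ^ n / 4) - 1 ≤ zetaR (2 * n + 3) * 1 - 1 := by
          gcongr
          linarith
      _ ≤ (zetaR 2 - 1) * (1 / 4) ^ n := by rwa [mul_one]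
      _ ≤ zetaR 2 * (1 / 4) ^ n := by gcongr; linarith

/-- The coefficient of `γ^(2n) + (1 - γ)^(2n)` in the series of `twoLoopBracket γ`, indexed from
`n = 0` as there. -/
noncomputable def twoLoopCoeff (n : ℕ) : ℝ :=
  (n + 1) * zetaR (2 * n + 3) * (1 - 1 / 4 ^ (n + 1))

lemma summable_norm_twoLoopCoeff_sub : Summable fun n ↦ ‖twoLoopCoeff n - (n + 1)‖ := by
  have hgeom : Summable fun n : ℕ ↦ ((n : ℝ) + 1) * (1 / 4) ^ n := by
    simpa using summable_choose_mul_geometric_of_norm_lt_one 1 (r := (1 / 4 : ℝ)) (by norm_num)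
  refine .of_nonneg_of_le (fun n ↦ norm_nonneg _) (fun n ↦ ?_) (hgeom.mul_left (zetaR 2))
  have hfactor : twoLoopCoeff n - (n + 1) =
      (n + 1) * (zetaR (2 * n + 3) * (1 - 1 / 4 ^ (n + 1)) - 1) := by
    rw [twoLoopCoeff]
    ring
  calc ‖twoLoopCoeff n - (n + 1)‖
      = (n + 1) * |zetaR (2 * n + 3) * (1 - 1 / 4 ^ (n + 1)) - 1| := by
        rw [hfactor, norm_mul, Real.norm_of_nonneg (by positivity), Real.norm_eq_abs]
    _ ≤ (n + 1) * (zetaR 2 * (1 / 4) ^ n) := by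
        gcongr
        exact abs_zetaR_mul_sub_one_le n
    _ = zetaR 2 * ((n + 1) * (1 / 4) ^ n) := by ring

lemma twoLoopBracket_one_sub (γ : ℝ) : twoLoopBracket (1 - γ) = twoLoopBracket γ := by
  simp only [twoLoopBracket, sub_sub_cancel, mul_comm ((1 - γ) ^ 2), add_comm ((1 - γ) ^ _)]

/-- **The apparent double poles of the two-loop bracket are only simple poles:**
`γ · B(γ) → 1` as `γ → 0⁺` and `(1−γ) · B(γ) → 1` as `γ → 1⁻`. -/
theorem twoLoopBracket_simple_poles :
    Tendsto (fun γ : ℝ => γ * twoLoopBracket γ) (𝓝[>] 0) (𝓝 1) ∧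
    Tendsto (fun γ : ℝ => (1 - γ) * twoLoopBracket γ) (𝓝[<] 1) (𝓝 1) := by
  have hzero : Tendsto (fun γ : ℝ ↦ γ * twoLoopBracket γ) (𝓝[>] 0) (𝓝 1) :=
    tendsto_mul_doublePole_sub_tsum summable_norm_twoLoopCoeff_sub
  have hcont : Continuous fun γ : ℝ ↦ 1 - γ := by fun_prop
  have hreflect : Tendsto (fun γ : ℝ ↦ 1 - γ) (𝓝[<] 1) (𝓝[>] 0) :=
    tendsto_nhdsWithin_iff.mpr ⟨(hcont.tendsto' 1 0 (sub_self 1)).mono_left nhdsWithin_le_nhds,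
      eventually_mem_nhdsWithin.mono fun _ hγ ↦ Set.mem_Ioi.mpr (sub_pos.mpr hγ)⟩
  exact ⟨hzero, (hzero.comp hreflect).congr fun γ ↦ by
    rw [Function.comp_apply, twoLoopBracket_one_sub]⟩
end
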